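/- Let Φ be a finite NCIFS that is subexponentially bounded, i.e. lim_{n→∞} (1/n) log #I^(n) = 0. Then Bowen's formula holds: HD(J(Φ)) = B(Φ). -/

import Mathlib

open Metric Set Filter Topology MeasureTheory
open scoped ENNReal

noncomputable section

/-- A non-autonomous conformal iterated function system (NCIFS) on a compact subset `X` of
`ℝ^d`, encoded via the composed maps `wMap m n ω` associated with finite words `ω` occupying
levels `m, m+1, …, n-1`, together with their conformal derivative norms `segN m n ω = ‖Dφ_ω‖`.
The fields record the standing assumptions: the open set condition, bounded distortion with
constant `K` (both for derivative norms of split words and as two-sided Lipschitz bounds),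
and uniform contraction with constant `η < 1`. -/
structure NCIFS (d : ℕ) where
  X : Set (EuclideanSpace ℝ (Fin d))
  hX_compact : IsCompact X
  hX_nonempty : X.Nonempty
  hX_regular : closure (interior X) = X
  hX_convex : Convex ℝ X
  I : ℕ → Type
  hI_ne : ∀ n, Nonempty (I n)
  K : ℝ
  hK : 1 ≤ K
  η : ℝ
  hη_pos : 0 < η
  hη_lt : η < 1
  /-- `segN m n ω` is the derivative norm `‖Dφ_ω‖` of the word `ω` on levels `m, …, n-1`. -/
  segN : (m n : ℕ) → ((j : Finset.Ico m n) → I j) → ℝ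
  segN_pos : ∀ m n ω, 0 < segN m n ω
  /-- uniform contraction -/
  segN_contract : ∀ m n ω, segN m n ω ≤ η ^ (n - m)
  /-- submultiplicativity and bounded distortion for derivative norms of split words -/
  segN_split : ∀ m k n, m ≤ k → k ≤ n →
      ∀ (ω : (j : Finset.Ico m n) → I j) (ω₁ : (j : Finset.Ico m k) → I j)
        (ω₂ : (j : Finset.Ico k n) → I j),
        (∀ (j : ℕ) (h₁ : j ∈ Finset.Ico m k) (h₂ : j ∈ Finset.Ico m n),
            ω₁ ⟨j, h₁⟩ = ω ⟨j, h₂⟩) →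
        (∀ (j : ℕ) (h₁ : j ∈ Finset.Ico k n) (h₂ : j ∈ Finset.Ico m n),
            ω₂ ⟨j, h₁⟩ = ω ⟨j, h₂⟩) →
        segN m n ω ≤ segN m k ω₁ * segN k n ω₂ ∧
          segN m k ω₁ * segN k n ω₂ ≤ K * segN m n ω
  /-- the conformal contraction associated to the word `ω` on levels `m, …, n-1` -/
  wMap : (m n : ℕ) → ((j : Finset.Ico m n) → I j) →
      EuclideanSpace ℝ (Fin d) → EuclideanSpace ℝ (Fin d)
  wMap_id : ∀ m (ω : (j : Finset.Ico m m) → I j) x, wMap m m ω x = x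
  wMap_mapsTo : ∀ m n ω, MapsTo (wMap m n ω) X X
  /-- upper conformal bound: `φ_ω` is `‖Dφ_ω‖`-Lipschitz on `X` -/
  wMap_lip : ∀ m n ω, ∀ x ∈ X, ∀ y ∈ X,
      dist (wMap m n ω x) (wMap m n ω y) ≤ segN m n ω * dist x y
  /-- lower conformal bound (bounded distortion) -/
  wMap_colip : ∀ m n ω, ∀ x ∈ X, ∀ y ∈ X,
      segN m n ω / K * dist x y ≤ dist (wMap m n ω x) (wMap m n ω y)
  /-- compatibility of the maps under splitting of words -/
  wMap_comp : ∀ m k n, m ≤ k → k ≤ n →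
      ∀ (ω : (j : Finset.Ico m n) → I j) (ω₁ : (j : Finset.Ico m k) → I j)
        (ω₂ : (j : Finset.Ico k n) → I j),
        (∀ (j : ℕ) (h₁ : j ∈ Finset.Ico m k) (h₂ : j ∈ Finset.Ico m n),
            ω₁ ⟨j, h₁⟩ = ω ⟨j, h₂⟩) →
        (∀ (j : ℕ) (h₁ : j ∈ Finset.Ico k n) (h₂ : j ∈ Finset.Ico m n),
            ω₂ ⟨j, h₁⟩ = ω ⟨j, h₂⟩) →
        ∀ x ∈ X, wMap m n ω x = wMap m k ω₁ (wMap k n ω₂ x)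
  /-- the open set condition -/
  osc : ∀ n (a b : (j : Finset.Ico n (n+1)) → I j), a ≠ b →
      Disjoint (wMap n (n+1) a '' interior X) (wMap n (n+1) b '' interior X)

namespace NCIFS

variable {d : ℕ} (Φ : NCIFS d)

/-- Words occupying levels `m, …, n-1`. -/
abbrev Word (m n : ℕ) := (j : Finset.Ico m n) → Φ.I j

instance (m n : ℕ) : Nonempty (Φ.Word m n) :=
  ⟨fun j => Classical.choice (Φ.hI_ne j)⟩

/-- The one-letter word at level `n` given by the index `i`. -/
def single (n : ℕ) (i : Φ.I n) : Φ.Word n (n+1) :=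
  fun j => cast (congrArg Φ.I (show n = (j : ℕ) by
    have := Finset.mem_Ico.mp j.2; omega)) i

/-- `‖Dφ_i^{(n)}‖`, the derivative norm of the single map with index `i` at level `n`. -/
def Dnorm (n : ℕ) (i : Φ.I n) : ℝ := Φ.segN n (n+1) (Φ.single n i)

/-- The partition function `Z_n(t) = Σ_{ω ∈ I^n} ‖Dφ_ω‖^t`, valued in `[0,∞]`. -/
def Z (n : ℕ) (t : ℝ) : ℝ≥0∞ := ∑' ω : Φ.Word 0 n, ENNReal.ofReal (Φ.segN 0 n ω ^ t)

/-- The lower pressure `P̲(t) = liminf (1/n) log Z_n(t)`, valued in `[-∞,∞]`. -/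
def lowP (t : ℝ) : EReal :=
  liminf (fun n : ℕ => (Φ.Z n t).log * (((n : ℝ)⁻¹ : ℝ) : EReal)) atTop

/-- The upper pressure `P̄(t) = limsup (1/n) log Z_n(t)`. -/
def upP (t : ℝ) : EReal :=
  limsup (fun n : ℕ => (Φ.Z n t).log * (((n : ℝ)⁻¹ : ℝ) : EReal)) atTop

/-- The Bowen dimension `B(Φ) = sup {t ≥ 0 : P̲(t) > 0}` (and `0` if there is no such `t`). -/
def Bdim : ℝ≥0∞ := ⨆ t : {t : ℝ // 0 ≤ t ∧ (0 : EReal) < Φ.lowP t}, ENNReal.ofReal t.1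

/-- The limit set `J(Φ) = ⋂_n ⋃_{ω ∈ I^n} φ_ω(X)`. -/
def limitSet : Set (EuclideanSpace ℝ (Fin d)) :=
  ⋂ n, ⋃ ω : Φ.Word 0 n, Φ.wMap 0 n ω '' Φ.X

/-- The minimal derivative norm `c̲_n` at level `n`. -/
def cmin (n : ℕ) : ℝ := ⨅ i : Φ.I n, Φ.Dnorm n i

/-- The maximal derivative norm `c̄_n` at level `n`. -/
def cmax (n : ℕ) : ℝ := ⨆ i : Φ.I n, Φ.Dnorm n i

/-- `ρ_n`, the maximal ratio of derivative norms at level `n`. -/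
def ρ (n : ℕ) : ℝ := Φ.cmax n / Φ.cmin n

/-- The modified partition function
`Z̃_n(t) = Z_{n-1}(t) · (#I^{(n)})^{t/d} · c̲_n^t`. -/
def Zt (n : ℕ) (t : ℝ) : ℝ≥0∞ :=
  Φ.Z (n - 1) t * ENNReal.ofReal ((Nat.card (Φ.I n) : ℝ) ^ (t / (d : ℝ)) * Φ.cmin n ^ t)

/-- `P̃(t) = liminf (1/n) log Z̃_n(t)`. -/
def tP (t : ℝ) : EReal :=
  liminf (fun n : ℕ => (Φ.Zt n t).log * (((n : ℝ)⁻¹ : ℝ) : EReal)) atTop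

end NCIFS

open Module

namespace NCIFS

variable {d : ℕ} (Φ : NCIFS d)

/-- Restriction of a word to a sub-window. -/
def res {m n : ℕ} (ω : Φ.Word m n) (a b : ℕ) (ha : m ≤ a) (hb : b ≤ n) : Φ.Word a b :=
  fun j => ω ⟨j.1, by have := Finset.mem_Ico.mp j.2; exact Finset.mem_Ico.mpr ⟨by omega, by omega⟩⟩

/-- Splitting words. -/
def splitEquiv (m k n : ℕ) (h1 : m ≤ k) (h2 : k ≤ n) : Φ.Word m n ≃ Φ.Word m k × Φ.Word k n where
  toFun ω := (Φ.res ω m k le_rfl h2, Φ.res ω k n h1 le_rfl)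
  invFun p := fun j => if h : j.1 < k then
      p.1 ⟨j.1, by have := Finset.mem_Ico.mp j.2; exact Finset.mem_Ico.mpr ⟨by omega, by omega⟩⟩
    else p.2 ⟨j.1, by have := Finset.mem_Ico.mp j.2; exact Finset.mem_Ico.mpr ⟨by omega, by omega⟩⟩
  left_inv ω := by
    funext j
    by_cases h : j.1 < k <;> simp [res]
  right_inv p := by
    refine Prod.ext ?_ ?_
    · funext j
      have := Finset.mem_Ico.mp j.2
      simp [res, this.2]
    · funext j
      have := Finset.mem_Ico.mp j.2
      simp [res, this.1]

lemma seg_split {m n : ℕ} (k : ℕ) (h1 : m ≤ k) (h2 : k ≤ n) (ω : Φ.Word m n) :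
    Φ.segN m n ω ≤ Φ.segN m k (Φ.res ω m k le_rfl h2) * Φ.segN k n (Φ.res ω k n h1 le_rfl) ∧
    Φ.segN m k (Φ.res ω m k le_rfl h2) * Φ.segN k n (Φ.res ω k n h1 le_rfl)
      ≤ Φ.K * Φ.segN m n ω :=
  Φ.segN_split m k n h1 h2 ω _ _ (fun _ _ _ => rfl) (fun _ _ _ => rfl)

lemma map_split {m n : ℕ} (k : ℕ) (h1 : m ≤ k) (h2 : k ≤ n) (ω : Φ.Word m n) :
    ∀ x ∈ Φ.X, Φ.wMap m n ω x =
      Φ.wMap m k (Φ.res ω m k le_rfl h2) (Φ.wMap k n (Φ.res ω k n h1 le_rfl) x) :=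
  Φ.wMap_comp m k n h1 h2 ω _ _ (fun _ _ _ => rfl) (fun _ _ _ => rfl)

lemma image_subset_res {m n : ℕ} (k : ℕ) (h1 : m ≤ k) (h2 : k ≤ n) (ω : Φ.Word m n) :
    Φ.wMap m n ω '' Φ.X ⊆ Φ.wMap m k (Φ.res ω m k le_rfl h2) '' Φ.X := by
  rintro _ ⟨x, hx, rfl⟩
  rw [Φ.map_split k h1 h2 ω x hx]
  exact ⟨_, Φ.wMap_mapsTo _ _ _ hx, rfl⟩

lemma seg_zero (ω : Φ.Word 0 0) : Φ.segN 0 0 ω = 1 := by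
  have h := (Φ.seg_split 0 le_rfl le_rfl ω).1
  have h2 := Φ.segN_contract 0 0 ω
  have h3 := Φ.segN_pos 0 0 ω
  have e : Φ.res ω 0 0 le_rfl le_rfl = ω := rfl
  rw [e] at h
  simp at h2
  nlinarith

lemma K_pos : 0 < Φ.K := lt_of_lt_of_le one_pos Φ.hK

lemma wMap_lipOn (m n : ℕ) (ω : Φ.Word m n) :
    LipschitzOnWith (Real.toNNReal (Φ.segN m n ω)) (Φ.wMap m n ω) Φ.X := by
  apply LipschitzOnWith.of_dist_le_mul
  intro x hx y hy
  rw [Real.coe_toNNReal _ (Φ.segN_pos m n ω).le]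
  exact Φ.wMap_lip m n ω x hx y hy

lemma wMap_injOn (m n : ℕ) (ω : Φ.Word m n) : InjOn (Φ.wMap m n ω) Φ.X := by
  intro x hx y hy h
  have h1 := Φ.wMap_colip m n ω x hx y hy
  rw [h, dist_self] at h1
  have h2 : 0 < Φ.segN m n ω / Φ.K := div_pos (Φ.segN_pos m n ω) Φ.K_pos
  have h3 : dist x y ≤ 0 := by
    by_contra hc
    push Not at hc
    nlinarith [mul_pos h2 hc]
  exact dist_le_zero.mp h3

/-- The reference measure. -/
def vol (d : ℕ) : Measure (EuclideanSpace ℝ (Fin d)) :=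
  μH[(finrank ℝ (EuclideanSpace ℝ (Fin d)) : ℕ)]

instance vol_haar (d : ℕ) : (vol d).IsAddHaarMeasure := by
  unfold vol; infer_instance

lemma vol_image_null {f : EuclideanSpace ℝ (Fin d) → EuclideanSpace ℝ (Fin d)} {C : NNReal}
    {s A : Set (EuclideanSpace ℝ (Fin d))} (hf : LipschitzOnWith C f s) (hA : A ⊆ s)
    (h : vol d A = 0) : vol d (f '' A) = 0 := by
  have := (hf.mono hA).hausdorffMeasure_image_le
    (d := ((finrank ℝ (EuclideanSpace ℝ (Fin d)) : ℕ) : ℝ)) (by positivity)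
  unfold vol at h ⊢
  rw [h, mul_zero] at this
  exact le_antisymm this bot_le

lemma vol_image_ge {f : EuclideanSpace ℝ (Fin d) → EuclideanSpace ℝ (Fin d)} {c : ℝ} (hc : 0 < c)
    {s : Set (EuclideanSpace ℝ (Fin d))}
    (hf : ∀ x ∈ s, ∀ y ∈ s, c * dist x y ≤ dist (f x) (f y)) :
    ENNReal.ofReal (c ^ d) * vol d s ≤ vol d (f '' s) := by
  set g : s → EuclideanSpace ℝ (Fin d) := fun x => f x
  have hg : AntilipschitzWith (Real.toNNReal c⁻¹) g := by
    apply AntilipschitzWith.of_le_mul_dist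
    intro x y
    rw [Real.coe_toNNReal _ (inv_pos.mpr hc).le, inv_mul_eq_div, le_div_iff₀ hc, mul_comm]
    exact hf x x.2 y y.2
  have h1 := hg.le_hausdorffMeasure_image
    (d := ((finrank ℝ (EuclideanSpace ℝ (Fin d)) : ℕ) : ℝ)) (by positivity) univ
  have h2 := (isometry_subtype_coe (s := s)).hausdorffMeasure_image
    (d := ((finrank ℝ (EuclideanSpace ℝ (Fin d)) : ℕ) : ℝ)) (Or.inl (by positivity)) univ
  have e : g '' univ = f '' s := by
    ext y; simp [g]
  rw [e] at h1
  simp only [image_univ, Subtype.range_coe_subtype, ofPred_mem_eq] at h2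
  rw [← h2, ENNReal.rpow_natCast] at h1
  have e2 : finrank ℝ (EuclideanSpace ℝ (Fin d)) = d := by simp
  change vol d s ≤ _ * vol d (f '' s) at h1
  rw [e2] at h1
  calc _ ≤ ENNReal.ofReal (c ^ d) * (((Real.toNNReal c⁻¹ : NNReal) : ℝ≥0∞) ^ d * vol d (f '' s)) := by
        gcongr
    _ = vol d (f '' s) := by
        rw [← mul_assoc]
        change ENNReal.ofReal (c ^ d) * (ENNReal.ofReal c⁻¹) ^ d * _ = _
        rw [← ENNReal.ofReal_pow (inv_pos.mpr hc).le, ← ENNReal.ofReal_mul (by positivity),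
          ← mul_pow, mul_inv_cancel₀ hc.ne']
        simp

lemma vol_frontier : vol d (frontier Φ.X) = 0 := Φ.hX_convex.addHaar_frontier (vol d)

lemma vol_X_pos : 0 < vol d Φ.X := by
  have : (interior Φ.X).Nonempty := by
    by_contra h
    rw [not_nonempty_iff_eq_empty] at h
    have h1 := Φ.hX_regular
    rw [h, closure_empty] at h1
    exact Φ.hX_nonempty.ne_empty h1.symm
  exact lt_of_lt_of_le (isOpen_interior.measure_pos (vol d) this) (measure_mono interior_subset)

lemma vol_X_top : vol d Φ.X ≠ ∞ := Φ.hX_compact.measure_lt_top.ne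

lemma isCompact_image (m n : ℕ) (ω : Φ.Word m n) : IsCompact (Φ.wMap m n ω '' Φ.X) :=
  Φ.hX_compact.image_of_continuousOn (Φ.wMap_lipOn m n ω).continuousOn

lemma single_disj (n : ℕ) (a b : Φ.Word n (n+1)) (h : a ≠ b) :
    vol d (Φ.wMap n (n+1) a '' Φ.X ∩ Φ.wMap n (n+1) b '' Φ.X) = 0 := by
  have hfr : frontier Φ.X ⊆ Φ.X := Φ.hX_compact.isClosed.frontier_subset
  have hsub : Φ.wMap n (n+1) a '' Φ.X ∩ Φ.wMap n (n+1) b '' Φ.X ⊆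
      Φ.wMap n (n+1) a '' frontier Φ.X ∪ Φ.wMap n (n+1) b '' frontier Φ.X := by
    rintro x ⟨⟨y, hy, rfl⟩, ⟨z, hz, hzy⟩⟩
    by_cases h1 : y ∈ interior Φ.X
    · by_cases h2 : z ∈ interior Φ.X
      · exact absurd (show Φ.wMap n (n+1) a y ∈ Φ.wMap n (n+1) b '' interior Φ.X from ⟨z, h2, hzy⟩)
          (Set.disjoint_left.mp (Φ.osc n a b h) ⟨y, h1, rfl⟩)
      · exact Or.inr ⟨z, ⟨subset_closure hz, h2⟩, hzy⟩
    · exact Or.inl ⟨y, ⟨subset_closure hy, h1⟩, rfl⟩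
  refine measure_mono_null hsub (measure_union_null ?_ ?_)
  · exact vol_image_null (Φ.wMap_lipOn n (n+1) a) hfr Φ.vol_frontier
  · exact vol_image_null (Φ.wMap_lipOn n (n+1) b) hfr Φ.vol_frontier

lemma word_disj (n : ℕ) (a b : Φ.Word 0 n) (h : a ≠ b) :
    vol d (Φ.wMap 0 n a '' Φ.X ∩ Φ.wMap 0 n b '' Φ.X) = 0 := by
  induction n with
  | zero => exact absurd (funext fun j => absurd j.2 (by simp)) h
  | succ n ih =>
    by_cases hu : Φ.res a 0 n le_rfl n.le_succ = Φ.res b 0 n le_rfl n.le_succ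
    · have hv : Φ.res a n (n+1) n.zero_le le_rfl ≠ Φ.res b n (n+1) n.zero_le le_rfl := by
        intro hv
        exact h ((Φ.splitEquiv 0 n (n+1) n.zero_le n.le_succ).injective (Prod.ext hu hv))
      have h0 := Φ.single_disj n _ _ hv
      refine measure_mono_null ?_ (vol_image_null
        (Φ.wMap_lipOn 0 n (Φ.res a 0 n le_rfl n.le_succ)) ?_ h0)
      · rintro x ⟨⟨y, hy, rfl⟩, ⟨z, hz, hzy⟩⟩
        rw [Φ.map_split n n.zero_le n.le_succ a y hy] at hzy ⊢
        rw [Φ.map_split n n.zero_le n.le_succ b z hz, ← hu] at hzy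
        have := Φ.wMap_injOn _ _ _ (Φ.wMap_mapsTo _ _ _ hz) (Φ.wMap_mapsTo _ _ _ hy) hzy
        exact ⟨_, ⟨⟨y, hy, rfl⟩, ⟨z, hz, this⟩⟩, rfl⟩
      · rintro x ⟨⟨y, hy, rfl⟩, -⟩
        exact Φ.wMap_mapsTo _ _ _ hy
    · exact measure_mono_null (inter_subset_inter (Φ.image_subset_res n n.zero_le n.le_succ a)
        (Φ.image_subset_res n n.zero_le n.le_succ b)) (ih _ _ hu)

/-- Bounded multiplicity. -/
lemma exists_mult : ∃ M : ℝ, 0 ≤ M ∧ ∀ (n : ℕ) (x : EuclideanSpace ℝ (Fin d)) (r : ℝ), 0 < r →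
    ∀ F : Finset (Φ.Word 0 n), (∀ ω ∈ F, r ≤ Φ.segN 0 n ω ∧
      (Φ.wMap 0 n ω '' Φ.X ∩ ball x r).Nonempty) → (F.card : ℝ) ≤ M := by
  set D := Metric.diam Φ.X
  have hD : 0 ≤ D := Metric.diam_nonneg
  set V := vol d (ball 0 1)
  have hV : V ≠ ∞ := measure_ball_lt_top.ne
  set Q : ℝ≥0∞ := ENNReal.ofReal ((1 + D) ^ d) * V / (ENNReal.ofReal ((Φ.K⁻¹) ^ d) * vol d Φ.X)
  have hden0 : ENNReal.ofReal ((Φ.K⁻¹) ^ d) * vol d Φ.X ≠ 0 := by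
    have := Φ.K_pos
    refine mul_ne_zero ?_ Φ.vol_X_pos.ne'
    have : 0 < (Φ.K⁻¹) ^ d := by positivity
    simpa using this
  have hdent : ENNReal.ofReal ((Φ.K⁻¹) ^ d) * vol d Φ.X ≠ ∞ :=
    ENNReal.mul_ne_top ENNReal.ofReal_ne_top Φ.vol_X_top
  have hQ : Q ≠ ∞ :=
    ENNReal.div_ne_top (ENNReal.mul_ne_top ENNReal.ofReal_ne_top hV) hden0
  refine ⟨Q.toReal, ENNReal.toReal_nonneg, ?_⟩
  intro n x r hr F hF
  have key : ∀ ω ∈ F, ∃ A : Set (EuclideanSpace ℝ (Fin d)), A ⊆ Φ.wMap 0 n ω '' Φ.X ∧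
      A ⊆ closedBall x ((1 + D) * r) ∧ IsCompact A ∧
      ENNReal.ofReal ((r / Φ.K) ^ d) * vol d Φ.X ≤ vol d A := by
    intro ω hω
    obtain ⟨hr1, p, ⟨q, hq, rfl⟩, hp⟩ := hF ω hω
    set s := r / Φ.segN 0 n ω
    have hsp := Φ.segN_pos 0 n ω
    have hs0 : 0 < s := by positivity
    have hs1 : s ≤ 1 := (div_le_one hsp).mpr hr1
    have hss : Φ.segN 0 n ω * s = r := by simp only [s]; field_simp
    have hmaps : MapsTo (AffineMap.homothety q s) Φ.X Φ.X := by
      intro y hy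
      rw [AffineMap.homothety_eq_lineMap]
      exact Φ.hX_convex.lineMap_mem hq hy ⟨hs0.le, hs1⟩
    have hdist : ∀ y z : EuclideanSpace ℝ (Fin d),
        dist (AffineMap.homothety q s y) (AffineMap.homothety q s z) = s * dist y z := by
      intro y z
      simp only [AffineMap.homothety_apply, vsub_eq_sub, vadd_eq_add, dist_eq_norm]
      rw [show s • (y - q) + q - (s • (z - q) + q) = s • (y - z) by module, norm_smul,
        Real.norm_of_nonneg hs0.le]
    have hqq : AffineMap.homothety q s q = q := AffineMap.homothety_apply_same q s
    refine ⟨(fun y => Φ.wMap 0 n ω (AffineMap.homothety q s y)) '' Φ.X, ?_, ?_, ?_, ?_⟩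
    · rintro _ ⟨y, hy, rfl⟩
      exact ⟨_, hmaps hy, rfl⟩
    · rintro _ ⟨y, hy, rfl⟩
      rw [mem_closedBall]
      have h1 := Φ.wMap_lip 0 n ω _ (hmaps hy) q hq
      have h2 : dist (AffineMap.homothety q s y) q = s * dist y q := by
        conv_lhs => rw [← hqq]
        rw [hqq]
        have := hdist y q
        rwa [hqq] at this
      have h3 : dist y q ≤ D := Metric.dist_le_diam_of_mem Φ.hX_compact.isBounded hy hq
      have h4 : dist (Φ.wMap 0 n ω q) x < r := hp
      rw [h2, ← mul_assoc, hss] at h1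
      have h5 := dist_triangle (Φ.wMap 0 n ω (AffineMap.homothety q s y)) (Φ.wMap 0 n ω q) x
      nlinarith
    · apply Φ.hX_compact.image_of_continuousOn
      refine (Φ.wMap_lipOn 0 n ω).continuousOn.comp ?_ hmaps
      exact (AffineMap.homothety_continuous q s).continuousOn
    · apply vol_image_ge (div_pos hr Φ.K_pos)
      intro y hy z hz
      have := Φ.wMap_colip 0 n ω _ (hmaps hy) _ (hmaps hz)
      rw [hdist] at this
      refine le_trans (le_of_eq ?_) this
      rw [← hss]; ring
  choose! A hA1 hA2 hA3 hA4 using key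
  have hsum : ∑ ω ∈ F, vol d (A ω) = vol d (⋃ ω ∈ F, A ω) := by
    rw [measure_biUnion_finset₀]
    · intro a ha b hb hab
      exact measure_mono_null (inter_subset_inter (hA1 a ha) (hA1 b hb)) (Φ.word_disj n a b hab)
    · intro b hb
      exact (hA3 b hb).measurableSet.nullMeasurableSet
  have hle : vol d (⋃ ω ∈ F, A ω) ≤ ENNReal.ofReal (((1 + D) * r) ^ d) * V := by
    have := measure_mono (μ := vol d) (iUnion₂_subset hA2)
    rw [Measure.addHaar_closedBall (vol d) x (by positivity)] at this
    simpa using this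
  have hge : (F.card : ℝ≥0∞) * (ENNReal.ofReal ((r / Φ.K) ^ d) * vol d Φ.X) ≤ ∑ ω ∈ F, vol d (A ω) := by
    rw [← nsmul_eq_mul]
    exact Finset.card_nsmul_le_sum _ _ _ hA4
  have hfin := hge.trans (hsum.le.trans hle)
  have hK := Φ.K_pos
  have hfin2 : (F.card : ℝ≥0∞) ≤ Q := by
    rw [ENNReal.le_div_iff_mul_le (Or.inl hden0) (Or.inl hdent)]
    have e1 : ENNReal.ofReal ((r / Φ.K) ^ d) =
        ENNReal.ofReal (r ^ d) * ENNReal.ofReal ((Φ.K⁻¹) ^ d) := by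
      rw [← ENNReal.ofReal_mul (by positivity), ← mul_pow, div_eq_mul_inv]
    have e2 : ENNReal.ofReal (((1 + D) * r) ^ d) =
        ENNReal.ofReal (r ^ d) * ENNReal.ofReal ((1 + D) ^ d) := by
      rw [← ENNReal.ofReal_mul (by positivity), ← mul_pow, mul_comm]
    rw [e1, e2] at hfin
    have hr0 : ENNReal.ofReal (r ^ d) ≠ 0 := by
      have : 0 < r ^ d := by positivity
      simpa using this
    rw [← ENNReal.mul_le_mul_iff_right hr0 ENNReal.ofReal_ne_top]
    calc _ = _ := by ring
      _ ≤ _ := hfin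
      _ = _ := by ring
  have := ENNReal.toReal_mono hQ hfin2
  simpa using this

end NCIFS
namespace NCIFS

lemma sum_biUnion_le' {α β : Type*} [DecidableEq α] [DecidableEq β] (s : Finset β)
    (A : β → Finset α) (f : α → ℝ) (hf : ∀ a, 0 ≤ f a) :
    ∑ a ∈ s.biUnion A, f a ≤ ∑ b ∈ s, ∑ a ∈ A b, f a := by
  induction s using Finset.induction_on with
  | empty => simp
  | insert b s hb ih =>
    rw [Finset.biUnion_insert, Finset.sum_insert hb]
    have h1 := Finset.sum_union_inter (s₁ := A b) (s₂ := s.biUnion A) (f := f)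
    have h2 : 0 ≤ ∑ a ∈ A b ∩ s.biUnion A, f a := Finset.sum_nonneg fun a _ => hf a
    linarith

variable {d : ℕ} (Φ : NCIFS d) [∀ n, Finite (Φ.I n)]

instance wordFintype (m n : ℕ) : Fintype (Φ.Word m n) := Fintype.ofFinite _

/-- Real-valued partition function. -/
def Zs (m n : ℕ) (t : ℝ) : ℝ := ∑ ω : Φ.Word m n, Φ.segN m n ω ^ t

lemma Zs_pos (m n : ℕ) (t : ℝ) : 0 < Φ.Zs m n t :=
  Finset.sum_pos (fun ω _ => Real.rpow_pos_of_pos (Φ.segN_pos m n ω) t) Finset.univ_nonempty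

lemma Z_eq (n : ℕ) (t : ℝ) : Φ.Z n t = ENNReal.ofReal (Φ.Zs 0 n t) := by
  unfold Z Zs
  rw [tsum_fintype, ENNReal.ofReal_sum_of_nonneg]
  intro ω _
  exact (Real.rpow_pos_of_pos (Φ.segN_pos 0 n ω) t).le

lemma logZ_eq (n : ℕ) (t : ℝ) : (Φ.Z n t).log * (((n : ℝ)⁻¹ : ℝ) : EReal) =
    ((Real.log (Φ.Zs 0 n t) * (n : ℝ)⁻¹ : ℝ) : EReal) := by
  rw [Z_eq, ENNReal.log_ofReal_of_pos (Φ.Zs_pos 0 n t), EReal.coe_mul]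

lemma lowP_pos {t : ℝ} (h : 0 < Φ.lowP t) :
    ∃ δ : ℝ, 0 < δ ∧ ∀ᶠ n : ℕ in atTop, Real.exp (δ * n) ≤ Φ.Zs 0 n t := by
  obtain ⟨δ, h0, h1⟩ := EReal.lt_iff_exists_real_btwn.mp h
  refine ⟨δ, by exact_mod_cast h0, ?_⟩
  have := eventually_lt_of_lt_liminf h1
  filter_upwards [this, eventually_gt_atTop 0] with n hn hn0
  rw [logZ_eq, EReal.coe_lt_coe_iff, ← div_eq_mul_inv, lt_div_iff₀ (by exact_mod_cast hn0)] at hn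
  rw [← Real.le_log_iff_exp_le (Φ.Zs_pos 0 n t)]
  exact hn.le

lemma lowP_nonpos {t : ℝ} (h : Φ.lowP t ≤ 0) {ε : ℝ} (hε : 0 < ε) :
    ∃ᶠ n : ℕ in atTop, Φ.Zs 0 n t ≤ Real.exp (ε * n) := by
  have h1 : Φ.lowP t < (ε : EReal) := lt_of_le_of_lt h (by exact_mod_cast hε)
  have := frequently_lt_of_liminf_lt (h := h1)
  refine (this.and_eventually (eventually_gt_atTop 0)).mono ?_
  rintro n ⟨hn, hn0⟩
  rw [logZ_eq, EReal.coe_lt_coe_iff, ← div_eq_mul_inv, div_lt_iff₀ (by exact_mod_cast hn0)] at hn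
  rw [← Real.log_le_iff_le_exp (Φ.Zs_pos 0 n t)]
  exact hn.le

lemma Zs_split (m n : ℕ) (h : m ≤ n) {t : ℝ} (ht : 0 ≤ t) :
    Φ.Zs 0 m t * Φ.Zs m n t ≤ Φ.K ^ t * Φ.Zs 0 n t := by
  unfold Zs
  rw [Finset.sum_mul_sum, ← Finset.sum_product', Finset.mul_sum, Finset.univ_product_univ,
    ← (Φ.splitEquiv 0 m n m.zero_le h).sum_comp]
  refine Finset.sum_le_sum fun ω _ => ?_
  have := (Φ.seg_split m m.zero_le h ω).2
  rw [← Real.mul_rpow (Φ.segN_pos _ _ _).le (Φ.segN_pos _ _ _).le,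
    ← Real.mul_rpow Φ.K_pos.le (Φ.segN_pos _ _ _).le]
  exact Real.rpow_le_rpow (mul_pos (Φ.segN_pos _ _ _) (Φ.segN_pos _ _ _)).le this ht

open Classical in
lemma fiber_sum (m n : ℕ) (h : m ≤ n) {t : ℝ} (ht : 0 ≤ t) (T : Finset (Φ.Word 0 m)) {r : ℝ}
    (hr : 0 ≤ r) (hT : ∀ τ ∈ T, Φ.segN 0 m τ ≤ r) :
    ∑ ω : Φ.Word 0 n with Φ.res ω 0 m le_rfl h ∈ T, Φ.segN 0 n ω ^ t ≤
      T.card * (r ^ t * Φ.Zs m n t) := by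
  have e : (T.card : ℝ) * (r ^ t * Φ.Zs m n t) =
      ∑ p ∈ T ×ˢ (Finset.univ : Finset (Φ.Word m n)), r ^ t * Φ.segN m n p.2 ^ t := by
    rw [Finset.sum_product]
    simp only [← Finset.mul_sum]
    rw [Finset.sum_const, nsmul_eq_mul]
    unfold Zs
    ring
  rw [e]
  calc _ ≤ ∑ ω : Φ.Word 0 n with Φ.res ω 0 m le_rfl h ∈ T,
        r ^ t * Φ.segN m n (Φ.res ω m n m.zero_le le_rfl) ^ t := by
        refine Finset.sum_le_sum fun ω hω => ?_
        have h1 := (Φ.seg_split m m.zero_le h ω).1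
        have h2 := hT _ (Finset.mem_filter.mp hω).2
        have h3 := Φ.segN_pos m n (Φ.res ω m n m.zero_le le_rfl)
        rw [← Real.mul_rpow hr h3.le]
        refine Real.rpow_le_rpow (Φ.segN_pos _ _ _).le (h1.trans ?_) ht
        gcongr
    _ = ∑ p ∈ Finset.image (Φ.splitEquiv 0 m n m.zero_le h)
          {ω : Φ.Word 0 n | Φ.res ω 0 m le_rfl h ∈ T}, r ^ t * Φ.segN m n p.2 ^ t := by
        rw [Finset.sum_image (fun a _ b _ hab => (Φ.splitEquiv 0 m n m.zero_le h).injective hab)]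
        rfl
    _ ≤ _ := by
        refine Finset.sum_le_sum_of_subset_of_nonneg ?_ ?_
        · intro p hp
          obtain ⟨ω, hω, rfl⟩ := Finset.mem_image.mp hp
          exact Finset.mem_product.mpr ⟨(Finset.mem_filter.mp hω).2, Finset.mem_univ _⟩
        · intro p _ _
          have := Φ.segN_pos m n p.2
          positivity

lemma card_single (k : ℕ) : Fintype.card (Φ.Word k (k+1)) ≤ Nat.card (Φ.I k) := by
  rw [← Nat.card_eq_fintype_card]
  refine Nat.card_le_card_of_injective
    (fun ω : Φ.Word k (k+1) => (ω ⟨k, by simp⟩ : Φ.I k)) ?_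
  intro a b hab
  funext ⟨j, hj⟩
  have : j = k := by have := Finset.mem_Ico.mp hj; omega
  subst this
  exact hab

open Classical in
lemma card_children (k : ℕ) (T : Finset (Φ.Word 0 (k+1))) (U : Finset (Φ.Word 0 k))
    (h : ∀ τ ∈ T, Φ.res τ 0 k le_rfl k.le_succ ∈ U) :
    T.card ≤ U.card * Nat.card (Φ.I k) := by
  calc T.card ≤ (U ×ˢ (Finset.univ : Finset (Φ.Word k (k+1)))).card := by
        refine Finset.card_le_card_of_injOn (Φ.splitEquiv 0 k (k+1) k.zero_le k.le_succ) ?_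
          (Equiv.injective _).injOn
        intro τ hτ
        exact Finset.mem_coe.mpr (Finset.mem_product.mpr ⟨h τ hτ, Finset.mem_univ _⟩)
    _ ≤ _ := by
        rw [Finset.card_product]
        exact Nat.mul_le_mul_left _ (Φ.card_single k)

lemma summable_ratio {t : ℝ} (h : 0 < Φ.lowP t)
    (hsub : Tendsto (fun n : ℕ => Real.log (Nat.card (Φ.I n)) / n) atTop (𝓝 0)) :
    Summable fun k : ℕ => (Nat.card (Φ.I k) : ℝ) / Φ.Zs 0 (k+1) t := by
  obtain ⟨δ, hδ, hev⟩ := Φ.lowP_pos h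
  have hs : Summable fun k : ℕ => Real.exp (k * (-(δ / 2))) :=
    Real.summable_exp_nat_mul_iff.mpr (by linarith)
  refine Summable.of_norm_bounded_eventually_nat hs ?_
  have h2 : ∀ᶠ n : ℕ in atTop, Real.log (Nat.card (Φ.I n)) / n < δ / 2 :=
    hsub.eventually_lt_const (by linarith)
  have h3 : ∀ᶠ n : ℕ in atTop, Real.exp (δ * (n+1 : ℕ)) ≤ Φ.Zs 0 (n+1) t :=
    (tendsto_add_atTop_nat 1).eventually hev
  filter_upwards [h2, h3, eventually_gt_atTop 0] with n hn2 hn3 hn0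
  have hn0' : (0 : ℝ) < n := by exact_mod_cast hn0
  have hc : (0 : ℝ) < Nat.card (Φ.I n) := by
    have := Φ.hI_ne n
    exact_mod_cast Nat.card_pos
  rw [div_lt_iff₀ hn0', Real.log_lt_iff_lt_exp hc] at hn2
  have hZ := Φ.Zs_pos 0 (n+1) t
  rw [Real.norm_of_nonneg (by positivity), div_le_iff₀ hZ]
  calc (Nat.card (Φ.I n) : ℝ) ≤ Real.exp (δ / 2 * n) := hn2.le
    _ ≤ Real.exp (n * (-(δ / 2))) * Real.exp (δ * (n+1 : ℕ)) := by
        rw [← Real.exp_add]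
        apply Real.exp_le_exp.mpr
        push_cast
        nlinarith
    _ ≤ _ := by gcongr

open Classical in
lemma core {t : ℝ} (ht : 0 ≤ t) (h : 0 < Φ.lowP t)
    (hsub : Tendsto (fun n : ℕ => Real.log (Nat.card (Φ.I n)) / n) atTop (𝓝 0)) :
    ∃ C : ℝ, 0 ≤ C ∧ ∀ (n : ℕ) (x : EuclideanSpace ℝ (Fin d)) (r : ℝ), 0 < r → Φ.η ^ n ≤ r →
      ∑ ω : Φ.Word 0 n with (Φ.wMap 0 n ω '' Φ.X ∩ ball x r).Nonempty, Φ.segN 0 n ω ^ t ≤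
        C * r ^ t * Φ.Zs 0 n t := by
  obtain ⟨M, hM0, hM⟩ := Φ.exists_mult
  have hsm := Φ.summable_ratio h hsub
  set S := ∑' k : ℕ, (Nat.card (Φ.I k) : ℝ) / Φ.Zs 0 (k+1) t
  have hterm : ∀ k : ℕ, 0 ≤ (Nat.card (Φ.I k) : ℝ) / Φ.Zs 0 (k+1) t := fun k => by
    have := Φ.Zs_pos 0 (k+1) t
    positivity
  have hS : 0 ≤ S := tsum_nonneg hterm
  have hKp := Φ.K_pos
  refine ⟨1 + M * Φ.K ^ t * S, by positivity, ?_⟩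
  intro n x r hr hn
  have hZn := Φ.Zs_pos 0 n t
  have hpos : ∀ ω : Φ.Word 0 n, 0 ≤ Φ.segN 0 n ω ^ t := fun ω =>
    (Real.rpow_pos_of_pos (Φ.segN_pos 0 n ω) t).le
  by_cases hr1 : 1 ≤ r
  · calc _ ≤ Φ.Zs 0 n t :=
          Finset.sum_le_sum_of_subset_of_nonneg (Finset.filter_subset _ _) (fun ω _ _ => hpos ω)
      _ = 1 * 1 * Φ.Zs 0 n t := by ring
      _ ≤ _ := by
        gcongr
        · have : 0 ≤ M * Φ.K ^ t * S := by positivity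
          linarith
        · exact Real.one_le_rpow hr1 ht
  push Not at hr1
  set T : (k : ℕ) → Finset (Φ.Word 0 (k+1)) := fun k =>
    {τ | Φ.segN 0 (k+1) τ ≤ r ∧ r < Φ.segN 0 k (Φ.res τ 0 k le_rfl k.le_succ) ∧
      (Φ.wMap 0 k (Φ.res τ 0 k le_rfl k.le_succ) '' Φ.X ∩ ball x r).Nonempty} with hTdef
  have hTcard : ∀ k, ((T k).card : ℝ) ≤ M * Nat.card (Φ.I k) := by
    intro k
    set U : Finset (Φ.Word 0 k) := {u | r ≤ Φ.segN 0 k u ∧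
      (Φ.wMap 0 k u '' Φ.X ∩ ball x r).Nonempty}
    have hU : (U.card : ℝ) ≤ M := hM k x r hr U (fun ω hω => (Finset.mem_filter.mp hω).2)
    have h1 := Φ.card_children k (T k) U (fun τ hτ => by
      have := (Finset.mem_filter.mp hτ).2
      exact Finset.mem_filter.mpr ⟨Finset.mem_univ _, this.2.1.le, this.2.2⟩)
    calc ((T k).card : ℝ) ≤ U.card * Nat.card (Φ.I k) := by exact_mod_cast h1
      _ ≤ _ := by gcongr
  set A : ℕ → Finset (Φ.Word 0 n) := fun k => if hk : k + 1 ≤ n then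
    Finset.univ.filter (fun ω => Φ.res ω 0 (k+1) le_rfl hk ∈ T k) else ∅ with hAdef
  have hAsum : ∀ k ∈ Finset.range n, ∑ ω ∈ A k, Φ.segN 0 n ω ^ t ≤
      (M * Φ.K ^ t * r ^ t * Φ.Zs 0 n t) * ((Nat.card (Φ.I k) : ℝ) / Φ.Zs 0 (k+1) t) := by
    intro k hk
    have hk' : k + 1 ≤ n := Finset.mem_range.mp hk
    simp only [hAdef, dif_pos hk']
    have h1 := Φ.fiber_sum (k+1) n hk' ht (T k) hr.le
      (fun τ hτ => (Finset.mem_filter.mp hτ).2.1)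
    have h2 := Φ.Zs_split (k+1) n hk' ht
    have hZ1 := Φ.Zs_pos 0 (k+1) t
    have hZ2 := Φ.Zs_pos (k+1) n t
    have h3 : Φ.Zs (k+1) n t ≤ Φ.K ^ t * Φ.Zs 0 n t / Φ.Zs 0 (k+1) t := by
      rw [le_div_iff₀ hZ1, mul_comm]; exact h2
    refine h1.trans ?_
    calc _ ≤ (M * Nat.card (Φ.I k)) * (r ^ t * (Φ.K ^ t * Φ.Zs 0 n t / Φ.Zs 0 (k+1) t)) := by
          gcongr
          exact hTcard k
      _ = _ := by ring
  have hcover : (Finset.univ.filter fun ω : Φ.Word 0 n =>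
      (Φ.wMap 0 n ω '' Φ.X ∩ ball x r).Nonempty) ⊆ (Finset.range n).biUnion A := by
    intro ω hω
    have hω := (Finset.mem_filter.mp hω).2
    -- first entry time
    have hex : ∃ m, ∃ hm : m ≤ n, Φ.segN 0 m (Φ.res ω 0 m le_rfl hm) ≤ r :=
      ⟨n, le_rfl, ((Φ.segN_contract 0 n _).trans (by simpa using hn))⟩
    obtain ⟨hm, hmr⟩ := Nat.find_spec hex
    have hmin := fun j => Nat.find_min hex (m := j)
    generalize Nat.find hex = m at hm hmr hmin
    cases m with
    | zero =>
      rw [Φ.seg_zero] at hmr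
      linarith
    | succ k =>
      refine Finset.mem_biUnion.mpr ⟨k, Finset.mem_range.mpr hm, ?_⟩
      simp only [hAdef, dif_pos hm]
      refine Finset.mem_filter.mpr ⟨Finset.mem_univ _,
        Finset.mem_filter.mpr ⟨Finset.mem_univ _, hmr, ?_, ?_⟩⟩
      · have := hmin k (Nat.lt_succ_self k)
        push Not at this
        exact this (by omega)
      · refine hω.mono (inter_subset_inter_left _ ?_)
        exact Φ.image_subset_res k k.zero_le (by omega) ω
  calc _ ≤ ∑ ω ∈ (Finset.range n).biUnion A, Φ.segN 0 n ω ^ t :=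
        Finset.sum_le_sum_of_subset_of_nonneg hcover (fun ω _ _ => hpos ω)
    _ ≤ ∑ k ∈ Finset.range n, ∑ ω ∈ A k, Φ.segN 0 n ω ^ t :=
        sum_biUnion_le' _ _ _ hpos
    _ ≤ ∑ k ∈ Finset.range n, (M * Φ.K ^ t * r ^ t * Φ.Zs 0 n t) *
          ((Nat.card (Φ.I k) : ℝ) / Φ.Zs 0 (k+1) t) := Finset.sum_le_sum hAsum
    _ ≤ (M * Φ.K ^ t * r ^ t * Φ.Zs 0 n t) * S := by
        rw [← Finset.mul_sum]
        gcongr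
        exact hsm.sum_le_tsum _ (fun k _ => hterm k)
    _ ≤ _ := by
        have : 0 ≤ r ^ t * Φ.Zs 0 n t := by positivity
        nlinarith

end NCIFS
namespace NCIFS

variable {d : ℕ} (Φ : NCIFS d) [∀ n, Finite (Φ.I n)]

lemma Zs_compare (n : ℕ) {t t' : ℝ} (h : t ≤ t') :
    Φ.Zs 0 n t' ≤ (Φ.η ^ n) ^ (t' - t) * Φ.Zs 0 n t := by
  unfold Zs
  rw [Finset.mul_sum]
  refine Finset.sum_le_sum fun ω _ => ?_
  have h0 := Φ.segN_pos 0 n ω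
  have h1 : Φ.segN 0 n ω ≤ Φ.η ^ n := by simpa using Φ.segN_contract 0 n ω
  rw [show t' = (t' - t) + t by ring, Real.rpow_add h0]
  rw [show t' - t + t - t = t' - t by ring]
  gcongr

lemma ediam_image_le (n : ℕ) (ω : Φ.Word 0 n) :
    Metric.ediam (Φ.wMap 0 n ω '' Φ.X) ≤ ENNReal.ofReal (Φ.segN 0 n ω * Metric.diam Φ.X) := by
  apply Metric.ediam_le
  rintro _ ⟨x, hx, rfl⟩ _ ⟨y, hy, rfl⟩
  rw [edist_dist]
  apply ENNReal.ofReal_le_ofReal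
  refine (Φ.wMap_lip 0 n ω x hx y hy).trans ?_
  have := Φ.segN_pos 0 n ω
  gcongr
  exact Metric.dist_le_diam_of_mem Φ.hX_compact.isBounded hx hy

lemma upper {t t' : ℝ} (ht : 0 ≤ t) (htt : t < t') (h : Φ.lowP t ≤ 0) :
    μH[t'] Φ.limitSet ≠ ∞ := by
  set D := Metric.diam Φ.X
  have hD : 0 ≤ D := Metric.diam_nonneg
  have hη := Φ.hη_pos
  have hη1 := Φ.hη_lt
  have hr : Tendsto (fun n : ℕ => ENNReal.ofReal (Φ.η ^ n * D)) atTop (𝓝 0) := by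
    have h1 : Tendsto (fun n : ℕ => Φ.η ^ n * D) atTop (𝓝 (0 * D)) :=
      (tendsto_pow_atTop_nhds_zero_of_lt_one hη.le hη1).mul_const D
    have := ENNReal.tendsto_ofReal h1
    simpa using this
  have hle := Measure.hausdorffMeasure_le_liminf_sum t' Φ.limitSet
    (fun n : ℕ => ENNReal.ofReal (Φ.η ^ n * D)) hr
    (fun n (ω : Φ.Word 0 n) => Φ.wMap 0 n ω '' Φ.X)
    (Eventually.of_forall fun n ω => (Φ.ediam_image_le n ω).trans (by
      apply ENNReal.ofReal_le_ofReal
      have := Φ.segN_contract 0 n ω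
      simp only [Nat.sub_zero] at this
      gcongr))
    (Eventually.of_forall fun n => iInter_subset _ n)
  refine (lt_of_le_of_lt (hle.trans ?_) (ENNReal.ofReal_lt_top (r := D ^ t'))).ne
  have hε : 0 < -(t' - t) * Real.log Φ.η := by
    have := Real.log_neg hη hη1
    nlinarith
  apply liminf_le_of_frequently_le'
  refine (Φ.lowP_nonpos h hε).mono ?_
  intro n hn
  have h1 : Φ.Zs 0 n t' ≤ 1 := by
    refine (Φ.Zs_compare n htt.le).trans ?_
    have e : (Φ.η ^ n) ^ (t' - t) = Real.exp ((t' - t) * Real.log Φ.η * n) := by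
      rw [Real.rpow_def_of_pos (by positivity), Real.log_pow]
      congr 1; ring
    calc _ ≤ (Φ.η ^ n) ^ (t' - t) * Real.exp (-(t' - t) * Real.log Φ.η * n) := by gcongr
      _ = 1 := by
        rw [e, ← Real.exp_add]
        convert Real.exp_zero using 2
        ring
  calc ∑ ω : Φ.Word 0 n, Metric.ediam (Φ.wMap 0 n ω '' Φ.X) ^ t'
      ≤ ∑ ω : Φ.Word 0 n, ENNReal.ofReal (Φ.segN 0 n ω ^ t' * D ^ t') := by
        refine Finset.sum_le_sum fun ω _ => ?_
        have h0 := Φ.segN_pos 0 n ω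
        have ht' : 0 ≤ t' := by linarith
        rw [← Real.mul_rpow h0.le hD, ← ENNReal.ofReal_rpow_of_nonneg (by positivity) ht']
        exact ENNReal.rpow_le_rpow (Φ.ediam_image_le n ω) ht'
    _ = ENNReal.ofReal (Φ.Zs 0 n t' * D ^ t') := by
        unfold Zs
        rw [Finset.sum_mul, ENNReal.ofReal_sum_of_nonneg]
        intro ω _
        have h0 := Φ.segN_pos 0 n ω
        positivity
    _ ≤ ENNReal.ofReal (D ^ t') := by
        apply ENNReal.ofReal_le_ofReal
        have : 0 ≤ D ^ t' := by positivity
        nlinarith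

lemma exists_radius {a t : ℝ} (ht : 0 < t) {e : ℝ} (he : 0 < e) :
    ∃ ρ, a < ρ ∧ ρ ^ t < a ^ t + e := by
  have h1 : Tendsto (fun x : ℝ => x ^ t) (𝓝 a) (𝓝 (a ^ t)) :=
    (Real.continuousAt_rpow_const a t (Or.inr ht.le)).tendsto
  have h2 : ∀ᶠ x in 𝓝[>] a, x ^ t < a ^ t + e :=
    (h1.mono_left nhdsWithin_le_nhds).eventually_lt_const (by linarith)
  obtain ⟨ρ, h3, h4⟩ := (h2.and self_mem_nhdsWithin).exists
  exact ⟨ρ, h4, h3⟩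

open Classical in
lemma lower {t : ℝ} (ht : 0 < t) (h : 0 < Φ.lowP t)
    (hsub : Tendsto (fun n : ℕ => Real.log (Nat.card (Φ.I n)) / n) atTop (𝓝 0)) :
    μH[t] Φ.limitSet ≠ 0 := by
  obtain ⟨C, hC, hcore⟩ := Φ.core ht.le h hsub
  intro hzero
  set ε : ℝ := (2 * (C + 1))⁻¹ with hε
  have hε0 : 0 < ε := by positivity
  have hεE : ENNReal.ofReal ε ≠ 0 := by simpa using hε0
  rw [Measure.hausdorffMeasure_apply] at hzero
  have h1 : (⨅ (u : ℕ → Set (EuclideanSpace ℝ (Fin d))) (_ : Φ.limitSet ⊆ ⋃ n, u n)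
      (_ : ∀ n, Metric.ediam (u n) ≤ 1), ∑' n, ⨆ _ : (u n).Nonempty, Metric.ediam (u n) ^ t)
      < ENNReal.ofReal ε := by
    refine lt_of_le_of_lt ?_ (pos_iff_ne_zero.mpr hεE)
    rw [← hzero]
    exact le_iSup₂_of_le (1 : ℝ≥0∞) one_pos le_rfl
  simp only [iInf_lt_iff] at h1
  obtain ⟨u, hu1, hu2, hu3⟩ := h1
  obtain ⟨e, he0, hesum⟩ := ENNReal.exists_pos_sum_of_countable hεE ℕ
  have hball : ∀ k, ∃ (x : EuclideanSpace ℝ (Fin d)) (ρ : ℝ), 0 < ρ ∧ u k ⊆ ball x ρ ∧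
      ENNReal.ofReal (ρ ^ t) ≤ (⨆ _ : (u k).Nonempty, Metric.ediam (u k) ^ t) + e k := by
    intro k
    have hfin : Metric.ediam (u k) ≠ ∞ := ne_top_of_le_ne_top ENNReal.one_ne_top (hu2 k)
    obtain ⟨ρ, hρ1, hρ2⟩ := exists_radius (a := Metric.diam (u k)) ht
      (e := (e k : ℝ)) (by exact_mod_cast he0 k)
    have hρ0 : 0 < ρ := lt_of_le_of_lt Metric.diam_nonneg hρ1
    have hest : ENNReal.ofReal (ρ ^ t) ≤ Metric.ediam (u k) ^ t + e k := by
      have e1 : Metric.ediam (u k) = ENNReal.ofReal (Metric.diam (u k)) :=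
        (ENNReal.ofReal_toReal hfin).symm
      rw [e1, ENNReal.ofReal_rpow_of_nonneg Metric.diam_nonneg ht.le, ← ENNReal.ofReal_coe_nnreal,
        ← ENNReal.ofReal_add (Real.rpow_nonneg Metric.diam_nonneg t) (e k).coe_nonneg]
      exact ENNReal.ofReal_le_ofReal hρ2.le
    rcases (u k).eq_empty_or_nonempty with he | hne
    · refine ⟨0, ρ, hρ0, by simp [he], hest.trans ?_⟩
      simp [he, ENNReal.zero_rpow_of_pos ht]
    · obtain ⟨x, hx⟩ := hne
      refine ⟨x, ρ, hρ0, ?_, hest.trans ?_⟩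
      · intro y hy
        rw [mem_ball]
        exact lt_of_le_of_lt (Metric.dist_le_diam_of_mem
          (Metric.isBounded_iff_ediam_ne_top.mpr hfin) hy hx) hρ1
      · rw [iSup_pos ⟨x, hx⟩]
  choose x ρ hρ0 hρball hρest using hball
  set V : ℕ → Set (EuclideanSpace ℝ (Fin d)) := fun n => ⋃ ω : Φ.Word 0 n, Φ.wMap 0 n ω '' Φ.X
  have hVanti : Antitone V := by
    intro m n hmn y hy
    obtain ⟨ω, hω⟩ := mem_iUnion.mp hy
    exact mem_iUnion.mpr ⟨_, Φ.image_subset_res m m.zero_le hmn ω hω⟩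
  have hVc : ∀ n, IsCompact (V n) := fun n => isCompact_iUnion fun ω => Φ.isCompact_image 0 n ω
  have hUopen : IsOpen (⋃ k, ball (x k) (ρ k)) := isOpen_iUnion fun k => isOpen_ball
  have hJU : Φ.limitSet ⊆ ⋃ k, ball (x k) (ρ k) := hu1.trans (iUnion_mono hρball)
  obtain ⟨N, hN⟩ := exists_subset_nhds_of_isCompact (V := V)
    (hVanti.directed_ge) hVc
    (U := ⋃ k, ball (x k) (ρ k)) (fun y hy => hUopen.mem_nhds (hJU hy))
  obtain ⟨F, hF⟩ := (hVc N).elim_finite_subcover _ (fun k => isOpen_ball) hN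
  have hη0 : Tendsto (fun n : ℕ => Φ.η ^ n) atTop (𝓝 0) :=
    tendsto_pow_atTop_nhds_zero_of_lt_one Φ.hη_pos.le Φ.hη_lt
  have hev : ∀ᶠ n : ℕ in atTop, ∀ k ∈ F, Φ.η ^ n ≤ ρ k := by
    rw [Finset.eventually_all]
    intro k _
    exact hη0.eventually_le_const (hρ0 k)
  obtain ⟨n, hn1, hn2⟩ := (hev.and (eventually_ge_atTop N)).exists
  have hZn := Φ.Zs_pos 0 n t
  set G : ℕ → Finset (Φ.Word 0 n) := fun k =>
    Finset.univ.filter fun ω => (Φ.wMap 0 n ω '' Φ.X ∩ ball (x k) (ρ k)).Nonempty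
  have hcov : (Finset.univ : Finset (Φ.Word 0 n)) ⊆ F.biUnion G := by
    intro ω _
    obtain ⟨y, hy⟩ := Φ.hX_nonempty
    have hmem : Φ.wMap 0 n ω y ∈ V n := mem_iUnion.mpr ⟨ω, y, hy, rfl⟩
    obtain ⟨k, hk, hyk⟩ := mem_iUnion₂.mp (hF (hVanti hn2 hmem))
    exact Finset.mem_biUnion.mpr ⟨k, hk, Finset.mem_filter.mpr
      ⟨Finset.mem_univ _, _, ⟨y, hy, rfl⟩, hyk⟩⟩
  have hpos : ∀ ω : Φ.Word 0 n, 0 ≤ Φ.segN 0 n ω ^ t := fun ω =>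
    (Real.rpow_pos_of_pos (Φ.segN_pos 0 n ω) t).le
  have hbig : Φ.Zs 0 n t ≤ (C * ∑ k ∈ F, ρ k ^ t) * Φ.Zs 0 n t := by
    calc Φ.Zs 0 n t ≤ ∑ ω ∈ F.biUnion G, Φ.segN 0 n ω ^ t :=
          Finset.sum_le_sum_of_subset_of_nonneg hcov (fun ω _ _ => hpos ω)
      _ ≤ ∑ k ∈ F, ∑ ω ∈ G k, Φ.segN 0 n ω ^ t := sum_biUnion_le' _ _ _ hpos
      _ ≤ ∑ k ∈ F, C * ρ k ^ t * Φ.Zs 0 n t :=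
          Finset.sum_le_sum fun k hk => hcore n (x k) (ρ k) (hρ0 k) (hn1 k hk)
      _ = _ := by rw [Finset.mul_sum, Finset.sum_mul]
  have h1C : 1 ≤ C * ∑ k ∈ F, ρ k ^ t := by
    by_contra hlt
    push Not at hlt
    nlinarith
  have hsum : ∑ k ∈ F, ρ k ^ t ≤ 2 * ε := by
    rw [← ENNReal.ofReal_le_ofReal_iff (by positivity),
      ENNReal.ofReal_sum_of_nonneg (fun k _ => Real.rpow_nonneg (hρ0 k).le t)]
    calc _ ≤ ∑ k ∈ F, ((⨆ _ : (u k).Nonempty, Metric.ediam (u k) ^ t) + (e k : ℝ≥0∞)) :=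
          Finset.sum_le_sum fun k _ => hρest k
      _ ≤ ∑' k, ((⨆ _ : (u k).Nonempty, Metric.ediam (u k) ^ t) + (e k : ℝ≥0∞)) :=
          ENNReal.sum_le_tsum F
      _ = _ := ENNReal.tsum_add
      _ ≤ ENNReal.ofReal ε + ENNReal.ofReal ε := add_le_add hu3.le hesum.le
      _ = _ := by rw [← ENNReal.ofReal_add hε0.le hε0.le, two_mul]
  have hfin : C * ∑ k ∈ F, ρ k ^ t ≤ C * (C + 1)⁻¹ := by
    have : 2 * ε = (C + 1)⁻¹ := by rw [hε]; field_simp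
    rw [← this]
    gcongr
  have : C * (C + 1)⁻¹ < 1 := by
    rw [← div_eq_mul_inv, div_lt_one (by positivity)]
    linarith
  linarith

end NCIFS
/-- (Bowen's formula for systems of sub-exponential growth.) If a finite
NCIFS is subexponentially bounded, i.e. `lim (1/n) log #I^{(n)} = 0`, then Bowen's formula
holds: `HD(J(Φ)) = B(Φ)`. -/
theorem NCIFS.bowen_subexponential {d : ℕ} (Φ : NCIFS d) [∀ n, Finite (Φ.I n)]
    (hsub : Tendsto (fun n : ℕ => Real.log (Nat.card (Φ.I n)) / n) atTop (𝓝 0)) :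
    dimH Φ.limitSet = Φ.Bdim := by

  apply le_antisymm
  · by_contra hcon
    push Not at hcon
    obtain ⟨t', h1, h2⟩ := ENNReal.lt_iff_exists_nnreal_btwn.mp hcon
    obtain ⟨t, h3, h4⟩ := ENNReal.lt_iff_exists_nnreal_btwn.mp h1
    have hP : Φ.lowP t ≤ 0 := by
      by_contra hc
      push Not at hc
      have : ENNReal.ofReal (t : ℝ) ≤ Φ.Bdim :=
        le_iSup (fun s : {t : ℝ // 0 ≤ t ∧ (0 : EReal) < Φ.lowP t} => ENNReal.ofReal s.1)
          ⟨t, t.coe_nonneg, hc⟩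
      rw [ENNReal.ofReal_coe_nnreal] at this
      exact absurd h3 (not_lt.mpr this)
    have := Φ.upper t.coe_nonneg (show (t : ℝ) < t' by exact_mod_cast h4) hP
    exact absurd h2 (not_lt.mpr (dimH_le_of_hausdorffMeasure_ne_top this))
  · refine iSup_le ?_
    rintro ⟨t, ht, hP⟩
    rcases ht.eq_or_lt with h0 | h0
    · simp [← h0]
    · have := Φ.lower h0 hP hsub
      have e : ((Real.toNNReal t : NNReal) : ℝ) = t := Real.coe_toNNReal t ht
      rw [← e] at this
      exact le_dimH_of_hausdorffMeasure_ne_zero this
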